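/- Let 𝔥 be a separable complex Hilbert space of dimension greater than two and let d be a countably additive, tracially bounded decoherence functional for 𝔥. Then there exists a unique bounded linear operator 𝔐 on 𝔥 ⊗ 𝔥 such that, whenever p and q are projections on 𝔥 and {pₙ}_{n∈ℕ}, {qₙ}_{n∈ℕ} are orthogonal families of finite rank projections with p = Σₙ pₙ and q = Σₙ qₙ, one has d(p,q) = Σᵢ Σⱼ tr((pᵢ ⊗ qⱼ)𝔐). -/

import Mathlib

/- Common background definitions: decoherence functionals on the projection
lattice of a complex Hilbert space, boundedness/additivity notions, trace class
operators, and an axiomatisation of the Hilbert space tensor product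
`𝔥 ⊗ 𝔥` together with the operator tensor product. -/

noncomputable section

open scoped ComplexInnerProductSpace ComplexOrder
open ContinuousLinearMap

universe u

variable {E : Type u} [NormedAddCommGroup E] [InnerProductSpace ℂ E] [CompleteSpace E]
variable {G : Type u} [NormedAddCommGroup G] [InnerProductSpace ℂ G] [CompleteSpace G]

/-- `p` is an orthogonal projection on a Hilbert space. -/
def IsOrthoProj (p : E →L[ℂ] E) : Prop :=
  IsIdempotentElem p ∧ IsSelfAdjoint p

/-- `p` is an operator of finite rank. -/
def HasFiniteRank (p : E →L[ℂ] E) : Prop :=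
  FiniteDimensional ℂ ↥(LinearMap.range (p : E →ₗ[ℂ] E))

/-- A decoherence functional on the lattice of projections `P(𝔥)`
(modelled as a function on all pairs of bounded operators whose defining
properties refer only to its values at pairs of orthogonal projections). -/
structure IsDecoherenceFunctional (d : (E →L[ℂ] E) → (E →L[ℂ] E) → ℂ) : Prop where
  hermitian : ∀ p q, IsOrthoProj p → IsOrthoProj q → d p q = starRingEnd ℂ (d q p)
  pos : ∀ p, IsOrthoProj p → 0 ≤ d p p
  normalized : d 1 1 = 1
  orthoadd : ∀ p₁ p₂ q, IsOrthoProj p₁ → IsOrthoProj p₂ → IsOrthoProj q →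
    p₁ * p₂ = 0 → d (p₁ + p₂) q = d p₁ q + d p₂ q

/-- A decoherence functional is bounded if `{|d(p,q)|}` is a bounded set. -/
def DFBounded (d : (E →L[ℂ] E) → (E →L[ℂ] E) → ℂ) : Prop :=
  ∃ C : ℝ, ∀ p q, IsOrthoProj p → IsOrthoProj q → ‖d p q‖ ≤ C

/-- Countable additivity of a decoherence functional: for every countable
pairwise orthogonal family of projections summing (strongly) to `P`,
`d (P, q) = ∑ d (pᵢ, q)`. -/
def DFCountablyAdditive (d : (E →L[ℂ] E) → (E →L[ℂ] E) → ℂ) : Prop :=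
  ∀ (p : ℕ → E →L[ℂ] E) (P q : E →L[ℂ] E),
    (∀ i, IsOrthoProj (p i)) → IsOrthoProj P → IsOrthoProj q →
    (∀ i j, i ≠ j → p i * p j = 0) →
    (∀ x : E, HasSum (fun i => p i x) (P x)) →
    HasSum (fun i => d (p i) q) (d P q)

/-- Complete additivity of a decoherence functional. -/
def DFCompletelyAdditive (d : (E →L[ℂ] E) → (E →L[ℂ] E) → ℂ) : Prop :=
  ∀ (ι : Type u) (p : ι → E →L[ℂ] E) (P q : E →L[ℂ] E),
    (∀ i, IsOrthoProj (p i)) → IsOrthoProj P → IsOrthoProj q →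
    (∀ i j, i ≠ j → p i * p j = 0) →
    (∀ x : E, HasSum (fun i => p i x) (P x)) →
    HasSum (fun i => d (p i) q) (d P q)

/-- A bilinear form `D` on `B(𝔥) × B(𝔥)` is bounded. -/
def IsBoundedBilinear (D : (E →L[ℂ] E) →ₗ[ℂ] (E →L[ℂ] E) →ₗ[ℂ] ℂ) : Prop :=
  ∃ C : ℝ, ∀ x y : E →L[ℂ] E, ‖D x y‖ ≤ C * ‖x‖ * ‖y‖

/-- The bilinear form `D` extends the decoherence functional `d`. -/
def ExtendsDF (D : (E →L[ℂ] E) →ₗ[ℂ] (E →L[ℂ] E) →ₗ[ℂ] ℂ)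
    (d : (E →L[ℂ] E) → (E →L[ℂ] E) → ℂ) : Prop :=
  ∀ p q, IsOrthoProj p → IsOrthoProj q → D p q = d p q

/-- `T` is a trace class operator (via the standard characterisation: the sums
`∑ |⟪eᵢ, T fᵢ⟫|` over finite orthonormal families are uniformly bounded). -/
def IsTraceClass (T : E →L[ℂ] E) : Prop :=
  ∃ C : ℝ, ∀ (n : ℕ) (e f : Fin n → E), Orthonormal ℂ e → Orthonormal ℂ f →
    ∑ i, ‖⟪e i, T (f i)⟫‖ ≤ C

/-- The trace of an operator computed in the Hilbert basis `b` (for a trace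
class operator this is basis independent and is the usual trace). -/
def traceAlong {ι : Type*} (b : HilbertBasis ι ℂ E) (T : E →L[ℂ] E) : ℂ :=
  ∑' i, ⟪b i, T (b i)⟫

/-- The rank one orthogonal projection `p_ξ` onto the span of a unit vector `ξ`. -/
def rankOneProj (ξ : E) : E →L[ℂ] E :=
  (innerSL ℂ ξ).smulRight ξ

/-- An axiomatisation of the Hilbert space tensor product `G = E ⊗ E`:
a bilinear map `tmul` into `G` multiplying inner products and having dense span. -/
structure HilbertTensorProduct (E G : Type u) [NormedAddCommGroup E]
    [InnerProductSpace ℂ E] [NormedAddCommGroup G] [InnerProductSpace ℂ G] :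
    Type u where
  tmul : E →ₗ[ℂ] E →ₗ[ℂ] G
  inner_tmul : ∀ a b c d : E, ⟪tmul a b, tmul c d⟫ = ⟪a, c⟫ * ⟪b, d⟫
  dense_span : Dense (↑(Submodule.span ℂ (Set.range fun z : E × E => tmul z.1 z.2)) : Set G)

/-- The algebraic tensor product `E ⊗_alg E`, viewed as a (dense) subspace of `G`. -/
def HilbertTensorProduct.algSpan (J : HilbertTensorProduct E G) : Submodule ℂ G :=
  Submodule.span ℂ (Set.range fun z : E × E => J.tmul z.1 z.2)

/-- The Hilbert space tensor product together with the operator tensor product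
`(x, y) ↦ x ⊗ y` on bounded operators. -/
structure OperatorTensor (E G : Type u) [NormedAddCommGroup E]
    [InnerProductSpace ℂ E] [NormedAddCommGroup G] [InnerProductSpace ℂ G]
    extends HilbertTensorProduct E G where
  op : (E →L[ℂ] E) → (E →L[ℂ] E) → (G →L[ℂ] G)
  op_tmul : ∀ (x y : E →L[ℂ] E) (a b : E), op x y (tmul a b) = tmul (x a) (y b)

/-- The algebraic tensor product `K(𝔥) • K(𝔥)`: the span in `B(G)` of the
operators `x ⊗ y` with `x, y` compact. -/
def OperatorTensor.compactSpan (J : OperatorTensor E G) : Submodule ℂ (G →L[ℂ] G) :=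
  Submodule.span ℂ {T | ∃ x y : E →L[ℂ] E,
    IsCompactOperator (⇑x) ∧ IsCompactOperator (⇑y) ∧ T = J.op x y}

/-- `β` is the linear functional on `K(𝔥) • K(𝔥)` induced by the bilinear form
`D`, i.e. `β (x ⊗ y) = D (x, y)` for compact `x, y`. -/
def IsBetaFor (J : OperatorTensor E G)
    (D : (E →L[ℂ] E) →ₗ[ℂ] (E →L[ℂ] E) →ₗ[ℂ] ℂ)
    (β : ↥J.compactSpan →ₗ[ℂ] ℂ) : Prop :=
  ∀ x y : E →L[ℂ] E, IsCompactOperator (⇑x) → IsCompactOperator (⇑y) →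
    ∀ hm : J.op x y ∈ J.compactSpan, β ⟨J.op x y, hm⟩ = D x y

/-- `β` is bounded for the operator norm (inherited from `B(G)`). -/
def BetaNormBounded (J : OperatorTensor E G) (β : ↥J.compactSpan →ₗ[ℂ] ℂ) : Prop :=
  ∃ C : ℝ, ∀ S : J.compactSpan, ‖β S‖ ≤ C * ‖(S : G →L[ℂ] G)‖

/-- A decoherence functional is tensor bounded if its associated functional `β`
on `K(𝔥) • K(𝔥)` is bounded for the (pre-)C*-norm. -/
def IsTensorBounded (J : OperatorTensor E G)
    (d : (E →L[ℂ] E) → (E →L[ℂ] E) → ℂ) : Prop :=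
  ∃ D, IsBoundedBilinear D ∧ ExtendsDF D d ∧
    ∃ β, IsBetaFor J D β ∧ BetaNormBounded J β

/-- `β` is uniformly bounded on the projections `p_ξ`, `ξ` a unit vector of the
algebraic tensor product `𝔥 ⊗_alg 𝔥`. -/
def BetaTraciallyBounded (J : OperatorTensor E G) (β : ↥J.compactSpan →ₗ[ℂ] ℂ) : Prop :=
  ∃ C : ℝ, ∀ ξ : G, ξ ∈ J.toHilbertTensorProduct.algSpan → ‖ξ‖ = 1 →
    ∀ hm : rankOneProj ξ ∈ J.compactSpan, ‖β ⟨rankOneProj ξ, hm⟩‖ ≤ C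

/-- A decoherence functional is tracially bounded if it is bounded and its
associated functional `β` is uniformly bounded on rank one projections `p_ξ`
with `ξ` a unit vector in `𝔥 ⊗_alg 𝔥`. -/
def IsTraciallyBounded (J : OperatorTensor E G)
    (d : (E →L[ℂ] E) → (E →L[ℂ] E) → ℂ) : Prop :=
  DFBounded d ∧ ∃ D, IsBoundedBilinear D ∧ ExtendsDF D d ∧
    ∃ β, IsBetaFor J D β ∧ BetaTraciallyBounded J β

/-!
On the dense subspace `𝔥 ⊗_alg 𝔥` the functional `β` induces the sesquilinear form
`(ξ, η) ↦ β(|η⟩⟨ξ|)`. Tracial boundedness bounds this form on the diagonal of the unit sphere, so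
by polarization the form is bounded, and it is therefore given by a bounded operator `𝔐`.
Projections of finite rank are finite sums of operators `|e⟩⟨e|`, whence
`tr((p ⊗ q)𝔐) = β(p ⊗ q) = d(p, q)` for them; countable additivity in each variable yields the
double series. Conversely the double series for one-term families determines
`⟪a ⊗ b, 𝔐 (a ⊗ b)⟫` for all unit vectors `a`, `b`, and polarizing in one tensor factor at a time
shows that these numbers determine `𝔐`.
-/

section SesquilinearForms

theorem exists_norm_eq_one_smul_eq {𝕜 V : Type*} [RCLike 𝕜] [NormedAddCommGroup V]
    [NormedSpace 𝕜 V] {x : V} (hx : x ≠ 0) : ∃ (c : 𝕜) (u : V), ‖u‖ = 1 ∧ c • u = x :=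
  ⟨‖x‖, (‖x‖⁻¹ : 𝕜) • x, norm_smul_inv_norm hx, smul_inv_smul₀ (by simpa using hx) x⟩

theorem sesqForm_polarization {V : Type*} [AddCommGroup V] [Module ℂ V]
    (B : V →ₗ⋆[ℂ] V →ₗ[ℂ] ℂ) (x y : V) :
    4 * B x y = B (x + y) (x + y) - B (x - y) (x - y)
      - Complex.I * B (x + Complex.I • y) (x + Complex.I • y)
      + Complex.I * B (x - Complex.I • y) (x - Complex.I • y) := by
  simp only [map_add, map_sub, map_smulₛₗ, LinearMap.add_apply, LinearMap.sub_apply,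
    LinearMap.smul_apply, Complex.conj_I, RingHom.id_apply, smul_eq_mul]
  linear_combination (2 * B x y - 2 * B y x) * Complex.I_mul_I

theorem norm_sesqForm_smul_smul {𝕜 V : Type*} [RCLike 𝕜] [AddCommGroup V] [Module 𝕜 V]
    (B : V →ₗ⋆[𝕜] V →ₗ[𝕜] 𝕜) (c e : 𝕜) (x y : V) :
    ‖B (c • x) (e • y)‖ = ‖B x y‖ * ‖c‖ * ‖e‖ := by
  simp only [map_smulₛₗ, LinearMap.smul_apply, smul_eq_mul, norm_mul, RCLike.norm_conj,
    RingHom.id_apply]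
  ring

theorem norm_sesqForm_self_le {𝕜 V : Type*} [RCLike 𝕜] [NormedAddCommGroup V] [NormedSpace 𝕜 V]
    {B : V →ₗ⋆[𝕜] V →ₗ[𝕜] 𝕜} {C : ℝ} (hB : ∀ u, ‖u‖ = 1 → ‖B u u‖ ≤ C) (x : V) :
    ‖B x x‖ ≤ C * ‖x‖ ^ 2 := by
  obtain rfl | hx := eq_or_ne x 0
  · simp
  obtain ⟨c, u, hu, rfl⟩ := exists_norm_eq_one_smul_eq (𝕜 := 𝕜) hx
  rw [norm_sesqForm_smul_smul, norm_smul, hu, mul_one, mul_assoc, ← sq]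
  gcongr
  exact hB u hu

section InnerProductSpace

variable {V : Type*} [NormedAddCommGroup V] [InnerProductSpace ℂ V] {B : V →ₗ⋆[ℂ] V →ₗ[ℂ] ℂ}
  {C : ℝ}

theorem norm_sesqForm_le_add_sq (hB : ∀ u, ‖u‖ = 1 → ‖B u u‖ ≤ C) (x y : V) :
    ‖B x y‖ ≤ C * (‖x‖ ^ 2 + ‖y‖ ^ 2) := by
  have hdiag := norm_sesqForm_self_le hB
  have parallelogram (z : V) (hz : ‖z‖ = ‖y‖) :
      ‖x + z‖ ^ 2 + ‖x - z‖ ^ 2 = 2 * (‖x‖ ^ 2 + ‖y‖ ^ 2) := by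
    simpa only [sq, hz] using parallelogram_law_with_norm ℂ x z
  have hIy : ‖Complex.I • y‖ = ‖y‖ := by rw [norm_smul, Complex.norm_I, one_mul]
  have key : ‖4 * B x y‖ ≤ C * ‖x + y‖ ^ 2 + C * ‖x - y‖ ^ 2
      + C * ‖x + Complex.I • y‖ ^ 2 + C * ‖x - Complex.I • y‖ ^ 2 := by
    rw [sesqForm_polarization]
    refine norm_add_le_of_le (norm_sub_le_of_le (norm_sub_le_of_le ?_ ?_) ?_) ?_
    all_goals simpa only [norm_mul, Complex.norm_I, one_mul] using hdiag _
  rw [norm_mul, Complex.norm_ofNat] at key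
  linear_combination key / 4 + C / 4 * parallelogram y rfl + C / 4 * parallelogram _ hIy

theorem norm_sesqForm_le (hB : ∀ u, ‖u‖ = 1 → ‖B u u‖ ≤ C) (x y : V) :
    ‖B x y‖ ≤ 2 * C * ‖x‖ * ‖y‖ := by
  obtain rfl | hx := eq_or_ne x 0
  · simp
  obtain rfl | hy := eq_or_ne y 0
  · simp
  obtain ⟨c, u, hu, rfl⟩ := exists_norm_eq_one_smul_eq (𝕜 := ℂ) hx
  obtain ⟨e, v, hv, rfl⟩ := exists_norm_eq_one_smul_eq (𝕜 := ℂ) hy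
  rw [norm_sesqForm_smul_smul, norm_smul, norm_smul, hu, hv, mul_one, mul_one]
  gcongr
  simpa [hu, hv, one_add_one_eq_two, mul_comm] using norm_sesqForm_le_add_sq hB u v

end InnerProductSpace

theorem inner_eq_zero_of_unit_diag {V H : Type*} [NormedAddCommGroup V] [NormedSpace ℂ V]
    [NormedAddCommGroup H] [InnerProductSpace ℂ H] {f g : V →ₗ[ℂ] H}
    (h : ∀ u, ‖u‖ = 1 → ⟪f u, g u⟫ = 0) (x y : V) : ⟪f x, g y⟫ = 0 := by
  let B : V →ₗ⋆[ℂ] V →ₗ[ℂ] ℂ := ((innerₛₗ ℂ).comp f).compl₂ g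
  have hdiag (z : V) : B z z = 0 := by
    have hz := norm_sesqForm_self_le (B := B) (fun u hu => (norm_eq_zero.2 (h u hu)).le) z
    rwa [zero_mul, norm_le_zero_iff] at hz
  have h4 := sesqForm_polarization B x y
  simp only [hdiag, mul_zero, sub_zero, add_zero] at h4
  exact (mul_eq_zero_iff_left four_ne_zero).1 h4

theorem exists_clm_inner_eq_of_dense {𝕜 H : Type*} [RCLike 𝕜] [NormedAddCommGroup H]
    [InnerProductSpace 𝕜 H] [CompleteSpace H] {W : Submodule 𝕜 H} (hW : Dense (W : Set H))
    {B : W →ₗ⋆[𝕜] W →ₗ[𝕜] 𝕜} {C : ℝ} (hB : ∀ ξ η, ‖B ξ η‖ ≤ C * ‖ξ‖ * ‖η‖) :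
    ∃ M : H →L[𝕜] H, ∀ ξ η : W, inner 𝕜 (ξ : H) (M η) = B ξ η := by
  have hdense : DenseRange W.subtypeL := by simpa [DenseRange] using hW
  have hind : IsUniformInducing W.subtypeL := isUniformInducing_val _
  let leftExt : H →L⋆[𝕜] W →L[𝕜] 𝕜 := (B.mkContinuous₂ C hB).extend W.subtypeL
  let bothExt : H →L[𝕜] H →L⋆[𝕜] 𝕜 := leftExt.flip.extend W.subtypeL
  have hext (ξ η : W) : bothExt η ξ = B ξ η := by
    have hη : bothExt η = leftExt.flip η := leftExt.flip.extend_eq hdense hind η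
    have hξ : leftExt ξ = B.mkContinuous₂ C hB ξ :=
      (B.mkContinuous₂ C hB).extend_eq hdense hind ξ
    rw [hη, ContinuousLinearMap.flip_apply, hξ, LinearMap.mkContinuous₂_apply]
  refine ⟨(InnerProductSpace.continuousLinearMapOfBilin bothExt.flip).adjoint, fun ξ η => ?_⟩
  rw [ContinuousLinearMap.adjoint_inner_right, InnerProductSpace.continuousLinearMapOfBilin_apply,
    ContinuousLinearMap.flip_apply, hext]

end SesquilinearForms

section TensorProducts

open InnerProductSpace

omit [CompleteSpace E] [CompleteSpace G]

theorem HilbertTensorProduct.clm_ext (J : HilbertTensorProduct E G) {F : Type*}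
    [AddCommMonoid F] [Module ℂ F] [TopologicalSpace F] [T2Space F] {S T : G →L[ℂ] F}
    (h : ∀ a b, S (J.tmul a b) = T (J.tmul a b)) : S = T := by
  refine ContinuousLinearMap.ext_on J.dense_span ?_
  rintro _ ⟨z, rfl⟩
  exact h z.1 z.2

theorem HilbertTensorProduct.inner_tmul_apply_tmul_eq_zero (J : HilbertTensorProduct E G)
    {N : G →L[ℂ] G} (h : ∀ a b, ‖a‖ = 1 → ‖b‖ = 1 → ⟪J.tmul a b, N (J.tmul a b)⟫ = 0)
    (a b c e : E) : ⟪J.tmul a b, N (J.tmul c e)⟫ = 0 := by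
  have polarize_left (a c : E) {b : E} (hb : ‖b‖ = 1) : ⟪J.tmul a b, N (J.tmul c b)⟫ = 0 :=
    inner_eq_zero_of_unit_diag (f := J.tmul.flip b) (g := N.toLinearMap ∘ₗ J.tmul.flip b)
      (fun a ha => h a b ha hb) a c
  exact inner_eq_zero_of_unit_diag (f := J.tmul a) (g := N.toLinearMap ∘ₗ J.tmul c)
    (fun b hb => polarize_left a c hb) b e

theorem HilbertTensorProduct.clm_ext_of_inner_tmul_self (J : HilbertTensorProduct E G)
    {S T : G →L[ℂ] G} (h : ∀ a b, ‖a‖ = 1 → ‖b‖ = 1 →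
      ⟪J.tmul a b, S (J.tmul a b)⟫ = ⟪J.tmul a b, T (J.tmul a b)⟫) : S = T := by
  have hzero := J.inner_tmul_apply_tmul_eq_zero (N := S - T) fun a b ha hb => by
    rw [sub_apply, inner_sub_right, h a b ha hb, sub_self]
  refine sub_eq_zero.1 (J.clm_ext fun c e => ?_)
  have horth : innerSL ℂ ((S - T) (J.tmul c e)) = 0 :=
    J.clm_ext fun a b => inner_eq_zero_symm.1 (hzero a b c e)
  exact norm_eq_zero.1 (by rw [← innerSL_apply_norm (𝕜 := ℂ), horth, norm_zero])

namespace OperatorTensor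

variable (J : OperatorTensor E G)

/-- The operator tensor product `(x, y) ↦ x ⊗ y` as a bilinear map; linearity is a consequence of
the density of the elementary tensors. -/
def opₗ : (E →L[ℂ] E) →ₗ[ℂ] (E →L[ℂ] E) →ₗ[ℂ] (G →L[ℂ] G) :=
  LinearMap.mk₂ ℂ J.op
    (fun _ _ _ => J.clm_ext fun _ _ => by simp [J.op_tmul])
    (fun _ _ _ => J.clm_ext fun _ _ => by simp [J.op_tmul])
    (fun _ _ _ => J.clm_ext fun _ _ => by simp [J.op_tmul])
    (fun _ _ _ => J.clm_ext fun _ _ => by simp [J.op_tmul])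

theorem opₗ_apply (x y : E →L[ℂ] E) : J.opₗ x y = J.op x y := rfl

theorem op_rankOne (a b c e : E) :
    J.op (rankOne ℂ a b) (rankOne ℂ c e) = rankOne ℂ (J.tmul a c) (J.tmul b e) :=
  J.clm_ext fun x y => by
    simp only [J.op_tmul, rankOne_apply, J.inner_tmul, map_smul, LinearMap.smul_apply, smul_smul,
      mul_comm]

end OperatorTensor

theorem hasFiniteRank_zero : HasFiniteRank (0 : E →L[ℂ] E) := by
  rw [HasFiniteRank, ContinuousLinearMap.toLinearMap_zero, LinearMap.range_zero]
  infer_instance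

theorem hasFiniteRank_rankOne (a b : E) : HasFiniteRank (rankOne ℂ a b) := by
  refine Submodule.finiteDimensional_of_le (S₂ := Submodule.span ℂ {a}) ?_
  rintro _ ⟨x, rfl⟩
  exact Submodule.smul_mem _ _ (Submodule.mem_span_singleton_self a)

theorem HasFiniteRank.isCompactOperator {p : E →L[ℂ] E} (hp : HasFiniteRank p) :
    IsCompactOperator p := by
  let R := LinearMap.range (p : E →ₗ[ℂ] E)
  have : FiniteDimensional ℂ R := hp
  have : ProperSpace R := FiniteDimensional.proper ℂ R
  have hcod : IsCompactOperator (p.codRestrict R fun x => ⟨x, rfl⟩) :=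
    isCompactOperator_of_locallyCompactSpace_dom _
  exact hcod.clm_comp R.subtypeL

namespace OperatorTensor

variable (J : OperatorTensor E G)

theorem op_mem_compactSpan {x y : E →L[ℂ] E} (hx : HasFiniteRank x) (hy : HasFiniteRank y) :
    J.op x y ∈ J.compactSpan :=
  Submodule.subset_span ⟨x, y, hx.isCompactOperator, hy.isCompactOperator, rfl⟩

theorem rankOne_mem_compactSpan {ξ η : G} (hξ : ξ ∈ J.algSpan) (hη : η ∈ J.algSpan) :
    rankOne ℂ ξ η ∈ J.compactSpan := by
  induction hξ, hη using Submodule.span_induction₂ with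
  | mem_mem ξ η hξ hη =>
    obtain ⟨⟨a, c⟩, rfl⟩ := hξ
    obtain ⟨⟨b, e⟩, rfl⟩ := hη
    rw [← J.op_rankOne]
    exact J.op_mem_compactSpan (hasFiniteRank_rankOne a b) (hasFiniteRank_rankOne c e)
  | zero_left => simp
  | zero_right => simp
  | add_left _ _ _ _ _ _ h₁ h₂ => rw [map_add]; exact add_mem h₁ h₂
  | add_right _ _ _ _ _ _ h₁ h₂ => rw [map_add]; exact add_mem h₁ h₂
  | smul_left _ _ _ _ _ h => rw [map_smul]; exact Submodule.smul_mem _ _ h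
  | smul_right _ _ _ _ _ h => rw [map_smulₛₗ]; exact Submodule.smul_mem _ _ h

/-- The sesquilinear form `(ξ, η) ↦ β(|η⟩⟨ξ|)` on `𝔥 ⊗_alg 𝔥`; the order of the factors makes it
conjugate-linear in the first variable, as the inner product is. -/
def rankOneForm (β : J.compactSpan →ₗ[ℂ] ℂ) : J.algSpan →ₗ⋆[ℂ] J.algSpan →ₗ[ℂ] ℂ :=
  LinearMap.mk₂'ₛₗ (starRingEnd ℂ) (RingHom.id ℂ)
    (fun ξ η => β ⟨rankOne ℂ (η : G) (ξ : G), J.rankOne_mem_compactSpan η.2 ξ.2⟩)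
    (fun ξ ξ' η => by
      rw [← map_add]
      exact congrArg β (Subtype.ext (map_add (rankOne ℂ (η : G)) (ξ : G) ξ')))
    (fun c ξ η => by
      rw [← map_smul]
      exact congrArg β (Subtype.ext (map_smulₛₗ (rankOne ℂ (η : G)) c (ξ : G))))
    (fun ξ η η' => by
      rw [← map_add]
      exact congrArg β (Subtype.ext
        (DFunLike.congr_fun (map_add (rankOne ℂ) (η : G) η') (ξ : G))))
    (fun c ξ η => by
      rw [RingHom.id_apply, ← map_smul]
      exact congrArg β (Subtype.ext
        (DFunLike.congr_fun (map_smul (rankOne ℂ) c (η : G)) (ξ : G))))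

theorem rankOneForm_apply (β : J.compactSpan →ₗ[ℂ] ℂ) (ξ η : J.algSpan) :
    J.rankOneForm β ξ η =
      β ⟨rankOne ℂ (η : G) (ξ : G), J.rankOne_mem_compactSpan η.2 ξ.2⟩ := rfl

end OperatorTensor

end TensorProducts

omit [CompleteSpace E] in
theorem BetaTraciallyBounded.exists_clm_inner_eq {J : OperatorTensor E G}
    {β : J.compactSpan →ₗ[ℂ] ℂ} (hβ : BetaTraciallyBounded J β) :
    ∃ M : G →L[ℂ] G, ∀ ξ η : J.algSpan, ⟪(ξ : G), M η⟫ = J.rankOneForm β ξ η := by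
  obtain ⟨C, hC⟩ := hβ
  have hdiag (ξ : J.algSpan) (hξ : ‖ξ‖ = 1) : ‖J.rankOneForm β ξ ξ‖ ≤ C :=
    hC ξ ξ.2 hξ (J.rankOne_mem_compactSpan ξ.2 ξ.2)
  exact exists_clm_inner_eq_of_dense J.dense_span (norm_sesqForm_le hdiag)

section Trace

open InnerProductSpace

omit [CompleteSpace E] [CompleteSpace G]

variable {ι : Type*} (bG : HilbertBasis ι ℂ G)

theorem hasSum_inner_rankOne_mul (u v : G) (M : G →L[ℂ] G) :
    HasSum (fun i => ⟪bG i, (rankOne ℂ u v * M) (bG i)⟫) ⟪v, M u⟫ := by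
  have h := (bG.hasSum_repr u).mapL (innerSL ℂ v ∘L M)
  simpa [bG.repr_apply_apply, inner_smul_right, mul_comm] using h

theorem traceAlong_sum_rankOne_mul {κ : Type*} (s : Finset κ) (u v : κ → G) (M : G →L[ℂ] G) :
    traceAlong bG ((∑ k ∈ s, rankOne ℂ (u k) (v k)) * M) = ∑ k ∈ s, ⟪v k, M (u k)⟫ := by
  have h := hasSum_sum fun k (_ : k ∈ s) => hasSum_inner_rankOne_mul bG (u k) (v k) M
  rw [← h.tsum_eq, traceAlong]
  simp only [Finset.sum_mul, sum_apply, inner_sum]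

theorem traceAlong_zero : traceAlong bG 0 = 0 := by
  simp [traceAlong]

theorem OperatorTensor.tsum_tsum_traceAlong_single (J : OperatorTensor E G) {κ μ : Type*}
    [DecidableEq κ] [DecidableEq μ] (k : κ) (m : μ) (x y : E →L[ℂ] E) (M : G →L[ℂ] G) :
    ∑' i, ∑' j, traceAlong bG (J.op ((Pi.single k x : κ → E →L[ℂ] E) i)
      ((Pi.single m y : μ → E →L[ℂ] E) j) * M) = traceAlong bG (J.op x y * M) := by
  rw [tsum_eq_single k fun i hi => ?_, tsum_eq_single m fun j hj => ?_, Pi.single_eq_same,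
    Pi.single_eq_same]
  · rw [Pi.single_eq_of_ne hj, ← J.opₗ_apply, map_zero, zero_mul, traceAlong_zero]
  · simp only [Pi.single_eq_of_ne hi, ← J.opₗ_apply, map_zero, LinearMap.zero_apply, zero_mul,
      traceAlong_zero, tsum_zero]

theorem OperatorTensor.traceAlong_op_rankOne_mul (J : OperatorTensor E G) (a b : E)
    (M : G →L[ℂ] G) : traceAlong bG (J.op (rankOne ℂ a a) (rankOne ℂ b b) * M) =
      ⟪J.tmul a b, M (J.tmul a b)⟫ := by
  rw [J.op_rankOne]
  exact (hasSum_inner_rankOne_mul bG _ _ M).tsum_eq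

end Trace

section Projections

open InnerProductSpace

theorem isOrthoProj_iff_isStarProjection {p : E →L[ℂ] E} : IsOrthoProj p ↔ IsStarProjection p :=
  ⟨fun hp => ⟨hp.1, hp.2⟩, fun hp => ⟨hp.isIdempotentElem, hp.isSelfAdjoint⟩⟩

theorem isOrthoProj_zero : IsOrthoProj (0 : E →L[ℂ] E) :=
  isOrthoProj_iff_isStarProjection.2 (.zero _)

theorem isOrthoProj_rankOne_self {a : E} (ha : ‖a‖ = 1) : IsOrthoProj (rankOne ℂ a a) :=
  isOrthoProj_iff_isStarProjection.2 (isStarProjection_rankOne_self ha)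

theorem IsOrthoProj.exists_eq_sum_rankOne {p : E →L[ℂ] E} (hp : IsOrthoProj p)
    (hfin : HasFiniteRank p) : ∃ (n : ℕ) (e : Fin n → E), p = ∑ k, rankOne ℂ (e k) (e k) := by
  have : FiniteDimensional ℂ p.range := hfin
  obtain ⟨_, hrange⟩ :=
    isStarProjection_iff_eq_starProjection_range.1 (isOrthoProj_iff_isStarProjection.1 hp)
  exact ⟨_, _, hrange.trans (stdOrthonormalBasis ℂ p.range).starProjection_eq_sum_rankOne⟩

omit [CompleteSpace G]

theorem OperatorTensor.exists_op_eq_sum_rankOne (J : OperatorTensor E G)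
    {p q : E →L[ℂ] E} (hp : IsOrthoProj p) (hpfin : HasFiniteRank p) (hq : IsOrthoProj q)
    (hqfin : HasFiniteRank q) : ∃ (κ : Type) (_ : Fintype κ) (ζ : κ → J.algSpan),
      J.op p q = ∑ k, rankOne ℂ (ζ k : G) (ζ k : G) := by
  obtain ⟨m, e, rfl⟩ := hp.exists_eq_sum_rankOne hpfin
  obtain ⟨n, f, rfl⟩ := hq.exists_eq_sum_rankOne hqfin
  refine ⟨Fin m × Fin n, inferInstance, fun k =>
    ⟨J.tmul (e k.1) (f k.2), Submodule.subset_span ⟨(e k.1, f k.2), rfl⟩⟩, ?_⟩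
  simp only [← J.opₗ_apply, map_sum, LinearMap.sum_apply, Fintype.sum_prod_type]
  rw [Finset.sum_comm]
  simp only [J.opₗ_apply, J.op_rankOne]

theorem OperatorTensor.traceAlong_op_mul_eq {ι : Type*}
    (bG : HilbertBasis ι ℂ G) (J : OperatorTensor E G) {β : J.compactSpan →ₗ[ℂ] ℂ} {M : G →L[ℂ] G}
    (hM : ∀ ξ η : J.algSpan, ⟪(ξ : G), M η⟫ = J.rankOneForm β ξ η) {p q : E →L[ℂ] E}
    (hp : IsOrthoProj p) (hpfin : HasFiniteRank p) (hq : IsOrthoProj q)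
    (hqfin : HasFiniteRank q) :
    traceAlong bG (J.op p q * M) = β ⟨J.op p q, J.op_mem_compactSpan hpfin hqfin⟩ := by
  obtain ⟨κ, _, ζ, hζ⟩ := J.exists_op_eq_sum_rankOne hp hpfin hq hqfin
  calc traceAlong bG (J.op p q * M) = ∑ k, J.rankOneForm β (ζ k) (ζ k) := by
        simp only [hζ, traceAlong_sum_rankOne_mul, hM]
    _ = β ⟨J.op p q, J.op_mem_compactSpan hpfin hqfin⟩ := by
        simp only [J.rankOneForm_apply, ← map_sum]
        exact congrArg β (Subtype.ext (by simp only [hζ, AddSubmonoidClass.coe_finsetSum]))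

end Projections

section Representation

open InnerProductSpace

variable {d : (E →L[ℂ] E) → (E →L[ℂ] E) → ℂ} {J : OperatorTensor E G} {ι : Type*}
  {bG : HilbertBasis ι ℂ G} {M : G →L[ℂ] G}

/-- `M` is the operator `𝔐` representing `d`: `d(p, q) = ∑ᵢ ∑ⱼ tr((pᵢ ⊗ qⱼ) M)` whenever `p` and `q`
are strong sums of orthogonal sequences `pᵢ` and `qⱼ` of projections of finite rank. Convergence of
the inner series is part of the notion, as `∑'` vanishes on divergent series. -/
def IsTraceRepresentation (J : OperatorTensor E G) (d : (E →L[ℂ] E) → (E →L[ℂ] E) → ℂ)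
    (bG : HilbertBasis ι ℂ G) (M : G →L[ℂ] G) : Prop :=
  ∀ p q : E →L[ℂ] E, IsOrthoProj p → IsOrthoProj q →
  ∀ pn qn : ℕ → E →L[ℂ] E,
    (∀ n, IsOrthoProj (pn n) ∧ HasFiniteRank (pn n)) →
    (∀ n, IsOrthoProj (qn n) ∧ HasFiniteRank (qn n)) →
    (∀ m n, m ≠ n → pn m * pn n = 0) →
    (∀ m n, m ≠ n → qn m * qn n = 0) →
    (∀ x : E, HasSum (fun n => pn n x) (p x)) →
    (∀ x : E, HasSum (fun n => qn n x) (q x)) →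
    (∀ i, Summable fun j => traceAlong bG (J.op (pn i) (qn j) * M)) ∧
    HasSum (fun i => ∑' j, traceAlong bG (J.op (pn i) (qn j) * M)) (d p q)

omit [CompleteSpace G]

theorem DFCountablyAdditive.hasSum_right (hca : DFCountablyAdditive d)
    (hherm : ∀ p q, IsOrthoProj p → IsOrthoProj q → d p q = starRingEnd ℂ (d q p))
    {p q : E →L[ℂ] E} {qn : ℕ → E →L[ℂ] E} (hp : IsOrthoProj p) (hq : IsOrthoProj q)
    (hqn : ∀ n, IsOrthoProj (qn n)) (horth : ∀ m n, m ≠ n → qn m * qn n = 0)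
    (hsum : ∀ x : E, HasSum (fun n => qn n x) (q x)) :
    HasSum (fun n => d p (qn n)) (d p q) := by
  simp only [hherm p _ hp (hqn _), hherm p q hp hq]
  exact Complex.hasSum_conj'.2 (hca qn q p hqn hq hp horth hsum)

theorem isTraceRepresentation_of_traceAlong_eq (hca : DFCountablyAdditive d)
    (hherm : ∀ p q, IsOrthoProj p → IsOrthoProj q → d p q = starRingEnd ℂ (d q p))
    (htr : ∀ p q, IsOrthoProj p → HasFiniteRank p → IsOrthoProj q → HasFiniteRank q →
      traceAlong bG (J.op p q * M) = d p q) :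
    IsTraceRepresentation J d bG M := by
  intro p q hp hq pn qn hpn hqn hpo hqo hps hqs
  have htr' (i j : ℕ) : traceAlong bG (J.op (pn i) (qn j) * M) = d (pn i) (qn j) :=
    htr _ _ (hpn i).1 (hpn i).2 (hqn j).1 (hqn j).2
  have hrow (i : ℕ) : HasSum (fun j => d (pn i) (qn j)) (d (pn i) q) :=
    hca.hasSum_right hherm (hpn i).1 hq (fun j => (hqn j).1) hqo hqs
  simp only [htr', fun i => (hrow i).tsum_eq]
  exact ⟨fun i => (hrow i).summable, hca pn p q (fun i => (hpn i).1) hp hq hpo hps⟩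

theorem IsTraceRepresentation.traceAlong_eq (hM : IsTraceRepresentation J d bG M)
    {p q : E →L[ℂ] E} (hp : IsOrthoProj p) (hpfin : HasFiniteRank p) (hq : IsOrthoProj q)
    (hqfin : HasFiniteRank q) : traceAlong bG (J.op p q * M) = d p q := by
  let oneTerm (r : E →L[ℂ] E) : ℕ → E →L[ℂ] E := Pi.single 0 r
  have oneTerm_zero (r : E →L[ℂ] E) : oneTerm r 0 = r :=
    Pi.single_eq_same (M := fun _ => E →L[ℂ] E) 0 r
  have oneTerm_ne (r : E →L[ℂ] E) {n : ℕ} (hn : n ≠ 0) : oneTerm r n = 0 :=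
    Pi.single_eq_of_ne (M := fun _ => E →L[ℂ] E) hn r
  have hproj {r : E →L[ℂ] E} (hr : IsOrthoProj r) (hrfin : HasFiniteRank r) (n : ℕ) :
      IsOrthoProj (oneTerm r n) ∧ HasFiniteRank (oneTerm r n) := by
    obtain rfl | hn := eq_or_ne n 0
    · rw [oneTerm_zero]; exact ⟨hr, hrfin⟩
    · rw [oneTerm_ne r hn]; exact ⟨isOrthoProj_zero, hasFiniteRank_zero⟩
  have horth (r : E →L[ℂ] E) (m n : ℕ) (hmn : m ≠ n) : oneTerm r m * oneTerm r n = 0 := by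
    obtain rfl | hm := eq_or_ne m 0
    · rw [oneTerm_ne r hmn.symm, mul_zero]
    · rw [oneTerm_ne r hm, zero_mul]
  have hsum (r : E →L[ℂ] E) (x : E) : HasSum (fun n => oneTerm r n x) (r x) :=
    (oneTerm_zero r).subst (motive := fun s => HasSum (fun n => oneTerm r n x) (s x)) <|
      hasSum_single 0 fun n hn => by rw [oneTerm_ne r hn, zero_apply]
  have hseries := (hM p q hp hq (oneTerm p) (oneTerm q) (hproj hp hpfin) (hproj hq hqfin)
    (horth p) (horth q) (hsum p) (hsum q)).2
  rw [← hseries.tsum_eq, J.tsum_tsum_traceAlong_single]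

theorem IsTraceRepresentation.unique {M' : G →L[ℂ] G} (hM : IsTraceRepresentation J d bG M)
    (hM' : IsTraceRepresentation J d bG M') : M = M' :=
  J.clm_ext_of_inner_tmul_self fun a b ha hb => by
    have htr {N : G →L[ℂ] G} (hN : IsTraceRepresentation J d bG N) :
        ⟪J.tmul a b, N (J.tmul a b)⟫ = d (rankOne ℂ a a) (rankOne ℂ b b) := by
      rw [← J.traceAlong_op_rankOne_mul bG a b N]
      exact hN.traceAlong_eq (isOrthoProj_rankOne_self ha) (hasFiniteRank_rankOne a a)
        (isOrthoProj_rankOne_self hb) (hasFiniteRank_rankOne b b)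
    rw [htr hM, htr hM']

end Representation

theorem stmt_13_general {d : (E →L[ℂ] E) → (E →L[ℂ] E) → ℂ}
    (hherm : ∀ p q, IsOrthoProj p → IsOrthoProj q → d p q = starRingEnd ℂ (d q p))
    (hca : DFCountablyAdditive d) (J : OperatorTensor E G)
    {D : (E →L[ℂ] E) →ₗ[ℂ] (E →L[ℂ] E) →ₗ[ℂ] ℂ} (hD : ExtendsDF D d)
    {β : J.compactSpan →ₗ[ℂ] ℂ} (hβ : IsBetaFor J D β) (hβbdd : BetaTraciallyBounded J β)
    {ι : Type*} (bG : HilbertBasis ι ℂ G) :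
    ∃! M : G →L[ℂ] G, IsTraceRepresentation J d bG M := by
  obtain ⟨M, hM⟩ := hβbdd.exists_clm_inner_eq
  have htr (p q : E →L[ℂ] E) (hp : IsOrthoProj p) (hpfin : HasFiniteRank p)
      (hq : IsOrthoProj q) (hqfin : HasFiniteRank q) :
      traceAlong bG (J.op p q * M) = d p q :=
    calc traceAlong bG (J.op p q * M)
        = β ⟨J.op p q, J.op_mem_compactSpan hpfin hqfin⟩ :=
          J.traceAlong_op_mul_eq bG hM hp hpfin hq hqfin
      _ = D p q := hβ p q hpfin.isCompactOperator hqfin.isCompactOperator _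
      _ = d p q := hD p q hp hq
  exact ⟨M, isTraceRepresentation_of_traceAlong_eq hca hherm htr, fun _ hM' =>
    hM'.unique (isTraceRepresentation_of_traceAlong_eq hca hherm htr)⟩

/-- For a countably additive, tracially bounded decoherence
functional `d` on a separable Hilbert space of dimension greater than two there
is a unique bounded operator `𝔐` on `𝔥 ⊗ 𝔥` such that whenever projections
`p, q` are (strong) sums of orthogonal families `{pₙ}, {qₙ}` of finite rank
projections, `d(p,q) = ∑ᵢ∑ⱼ tr((pᵢ ⊗ qⱼ) 𝔐)`. -/
theorem stmt_13 [TopologicalSpace.SeparableSpace E] (hdim : 2 < Module.rank ℂ E)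
    (d : (E →L[ℂ] E) → (E →L[ℂ] E) → ℂ) (hd : IsDecoherenceFunctional d)
    (hca : DFCountablyAdditive d)
    (J : OperatorTensor E G) (htb : IsTraciallyBounded J d)
    {ι : Type u} (bG : HilbertBasis ι ℂ G) :
    ∃! M : G →L[ℂ] G,
      ∀ p q : E →L[ℂ] E, IsOrthoProj p → IsOrthoProj q →
      ∀ pn qn : ℕ → E →L[ℂ] E,
        (∀ n, IsOrthoProj (pn n) ∧ HasFiniteRank (pn n)) →
        (∀ n, IsOrthoProj (qn n) ∧ HasFiniteRank (qn n)) →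
        (∀ m n, m ≠ n → pn m * pn n = 0) →
        (∀ m n, m ≠ n → qn m * qn n = 0) →
        (∀ x : E, HasSum (fun n => pn n x) (p x)) →
        (∀ x : E, HasSum (fun n => qn n x) (q x)) →
        (∀ i, Summable fun j => traceAlong bG (J.op (pn i) (qn j) * M)) ∧
        HasSum (fun i => ∑' j, traceAlong bG (J.op (pn i) (qn j) * M)) (d p q) := by
  obtain ⟨-, D, -, hD, β, hβ, hβbdd⟩ := htb
  exact stmt_13_general hd.hermitian hca J hD hβ hβbdd bG
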